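/- Define the weight of a real a ∈ (0,1] by w(a) = 1 if a > 1/2, w(a) = 1/2 if 1/4 < a ≤ 1/2, and w(a) = 1/4 if a ≤ 1/4. If B is a finite multiset of at most 4 reals in (0,1] whose sum is at most 1, then the total weight of the elements of B is at most 2. -/

import Mathlib

open scoped Classical
noncomputable section

/-- An input is a list of item sizes, each in (0,1]. -/
def ValidInput (L : List ℝ) : Prop := ∀ x ∈ L, 0 < x ∧ x ≤ 1

/-- A packing assigns a bin index to each item; it is feasible for cardinality
constraint `k` if every bin receives at most `k` items of total size at most 1. -/
def IsFeasible (k : ℕ) (L : List ℝ) (f : Fin L.length → ℕ) : Prop :=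
  ∀ b : ℕ,
    (Finset.univ.filter (fun i => f i = b)).card ≤ k ∧
    ∑ i ∈ Finset.univ.filter (fun i => f i = b), L.get i ≤ 1

/-- The number of bins used by a packing. -/
def binsUsed (L : List ℝ) (f : Fin L.length → ℕ) : ℕ :=
  (Finset.univ.image f).card

/-- The optimal (minimum) number of bins in a feasible packing of `L`. -/
def OPT (k : ℕ) (L : List ℝ) : ℕ :=
  sInf {n | ∃ f : Fin L.length → ℕ, IsFeasible k L f ∧ binsUsed L f = n}

/-- A deterministic online algorithm is a strategy: given the items seen so far
(ending with the item to be packed), it returns the bin index for that item. -/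
def onlinePacking (A : List ℝ → ℕ) (L : List ℝ) : Fin L.length → ℕ :=
  fun i => A (L.take (i.1 + 1))

/-- The strategy `A` is a valid online algorithm for cardinality constraint `k`
if on every valid input the induced packing is feasible. -/
def OnlineValid (k : ℕ) (A : List ℝ → ℕ) : Prop :=
  ∀ L : List ℝ, ValidInput L → IsFeasible k L (onlinePacking A L)

/-- The number of bins used by online algorithm `A` on input `L`. -/
def onlineBins (A : List ℝ → ℕ) (L : List ℝ) : ℕ :=
  binsUsed L (onlinePacking A L)

/-- The state of First Fit: a list of open bins (in order of opening),
each recorded as (number of items, total size). `ffFind` returns the index of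
the first bin that can receive an item of size `x` (it has at most `k-1` items
and the item fits); if none, the index of a new bin. -/
def ffFind (k : ℕ) (x : ℝ) : List (ℕ × ℝ) → ℕ
  | [] => 0
  | b :: bs => if b.1 < k ∧ b.2 + x ≤ 1 then 0 else ffFind k x bs + 1

/-- Update the First Fit state after packing an item of size `x`. -/
def ffUpdate (k : ℕ) (x : ℝ) : List (ℕ × ℝ) → List (ℕ × ℝ)
  | [] => [(1, x)]
  | b :: bs =>
      if b.1 < k ∧ b.2 + x ≤ 1 then (b.1 + 1, b.2 + x) :: bs
      else b :: ffUpdate k x bs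

/-- The final state of First Fit with cardinality constraint `k` on input `L`. -/
def ffState (k : ℕ) (L : List ℝ) : List (ℕ × ℝ) :=
  L.foldl (fun bs x => ffUpdate k x bs) []

/-- The number of bins used by First Fit with cardinality constraint `k` on `L`. -/
def FF (k : ℕ) (L : List ℝ) : ℕ := (ffState k L).length

/-- The bin index into which First Fit packs the `i`-th item of `L`. -/
def ffAssign (k : ℕ) (L : List ℝ) (i : Fin L.length) : ℕ :=
  ffFind k (L.get i) (ffState k (L.take i.1))

/-- The weight function for k = 4: large items (size > 1/2) weigh 1, medium items
(size in (1/4, 1/2]) weigh 1/2, small items (size ≤ 1/4) weigh 1/4. -/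
def w4 (a : ℝ) : ℝ := if 1 / 2 < a then 1 else if 1 / 4 < a then 1 / 2 else 1 / 4

/-- If `B` is a multiset of at most 4 reals in (0,1] with sum at most 1,
then the total weight of its elements is at most 2. -/
theorem weight_bin_le_two (B : Multiset ℝ) (hB : ∀ x ∈ B, 0 < x ∧ x ≤ 1)
    (hcard : Multiset.card B ≤ 4) (hsum : B.sum ≤ 1) :
    (B.map w4).sum ≤ 2 := by
  -- With no large item, at most four items weigh at most `1/2` each. Otherwise there is exactly one
  -- large item, at most one medium one (a large and two medium items exceed size 1), and the weight
  -- is at most `1 + 1/2 + 1/4 + 1/4`. The cases below split on the class of each item.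
  induction B using Quotient.inductionOn with
  | h l =>
    rcases l with _ | ⟨a, _ | ⟨b, _ | ⟨c, _ | ⟨d, _ | ⟨e, l⟩⟩⟩⟩⟩
    all_goals
      simp [w4] at hB hcard hsum ⊢
    all_goals first
      | omega
      | (split_ifs <;> linarith)
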